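/- Let K:ℕ→ℕ with K(m)≥1 satisfy lim_{m→∞} (ln³ p_m)/K(m)² = c for some c≥0, and fix σ with 0<σ≤1. Then, as m→∞, the weighted sum of error terms satisfies Σ_{k=0}^{K(m)−1} E_m^{(σ)}(k,K(m))·p_m^{−(σ−δ_k)} = O(1/ln p_m) if c>0, and = o(1/ln p_m) if c=0. -/

import Mathlib

open Filter Asymptotics
open scoped Topology

noncomputable section

/-- The `j`-th prime number, `0`-indexed: `nthPrime 0 = 2`, `nthPrime 1 = 3`, … -/
def nthPrime (j : ℕ) : ℕ := Nat.nth Nat.Prime j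

/-- The partition function `Z_m = ∏_{j=1}^m (1 + 1/p_j)`. -/
def Zm (m : ℕ) : ℝ := ∏ j ∈ Finset.range m, (1 + 1 / (nthPrime j : ℝ))

/-- The element `n = ∏_{j=1}^m p_j^{ν_j}` of `Ω_m` parametrized by `ν ∈ {0,1}^m`. -/
def elt (m : ℕ) (ν : Fin m → Bool) : ℕ := ∏ j : Fin m, if ν j then nthPrime j else 1

/-- The mass `π_m(n) = 1/(Z_m n)`. -/
def mass (m : ℕ) (ν : Fin m → Bool) : ℝ := 1 / (Zm m * (elt m ν : ℝ))

open scoped Classical in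
/-- The error term
`E_m^{(σ)}(k,K) = Π_m{ σk/K < ln n/ln p_m < σ(k+1)/K } - e^{-γ} σ/K`. -/
def Err (m : ℕ) (σ : ℝ) (K : ℕ) (k : ℕ) : ℝ :=
  (∑ ν ∈ Finset.univ.filter (fun ν : Fin m → Bool =>
      σ * k / K < Real.log (elt m ν) / Real.log (nthPrime (m - 1)) ∧
      Real.log (elt m ν) / Real.log (nthPrime (m - 1)) < σ * (k + 1) / K),
    mass m ν) - Real.exp (-Real.eulerMascheroniConstant) * σ / K


open ArithmeticFunction in
lemma aux_mertens1 : ∃ C : ℝ, ∀ N : ℕ,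
    |∑ n ∈ Finset.Ioc 0 N, vonMangoldt n / (n : ℝ) - Real.log N| ≤ C := by
  refine ⟨Real.log 4 + 5, fun N => ?_⟩
  have hl4 : 0 ≤ Real.log 4 := Real.log_nonneg (by norm_num)
  rcases Nat.eq_zero_or_pos N with rfl | hN
  · simp; linarith
  have hNr : (0 : ℝ) < N := by exact_mod_cast hN
  have key : ∑ n ∈ Finset.Ioc 0 N, vonMangoldt n * ((N / n : ℕ) : ℝ) = Real.log (N.factorial) := by
    rw [← sum_Ioc_mul_zeta_eq_sum, vonMangoldt_mul_zeta]
    clear hN hNr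
    induction N with
    | zero => simp
    | succ k ih =>
      rw [← Finset.insert_Ioc_right_eq_Ioc_add_one (by omega), Finset.sum_insert (by simp), ih, Nat.factorial_succ,
        Nat.cast_mul, Real.log_mul (by positivity) (by positivity)]
      simp [ArithmeticFunction.log_apply]
  have up : Real.log (N.factorial) ≤ N * Real.log N := by
    rw [← Real.log_pow]
    apply Real.log_le_log (by positivity)
    exact_mod_cast Nat.factorial_le_pow N
  have lo : N * Real.log N - N ≤ Real.log (N.factorial) := by
    have h := Real.pow_div_factorial_le_exp (N : ℝ) hNr.le N
    have h2 := Real.log_le_log (by positivity) h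
    rw [Real.log_exp, Real.log_div (by positivity) (by positivity), Real.log_pow] at h2
    linarith
  have psi := Chebyshev.psi_le_const_mul_self (x := (N : ℝ)) hNr.le
  have psi2 : Chebyshev.psi (N : ℝ) = ∑ n ∈ Finset.Ioc 0 N, vonMangoldt n := by
    simp [Chebyshev.psi]
  have e1 : Real.log N.factorial ≤ N * ∑ n ∈ Finset.Ioc 0 N, vonMangoldt n / (n : ℝ) := by
    rw [← key, Finset.mul_sum]
    apply Finset.sum_le_sum
    intro n hn
    have : ((N / n : ℕ) : ℝ) ≤ N / n := Nat.cast_div_le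
    calc _ ≤ vonMangoldt n * (N / n : ℝ) := mul_le_mul_of_nonneg_left this vonMangoldt_nonneg
      _ = _ := by ring
  have e2 : N * ∑ n ∈ Finset.Ioc 0 N, vonMangoldt n / (n : ℝ) ≤ Real.log N.factorial + Chebyshev.psi N := by
    rw [← key, psi2, Finset.mul_sum, ← Finset.sum_add_distrib]
    apply Finset.sum_le_sum
    intro n hn
    have hn0 : 0 < n := (Finset.mem_Ioc.1 hn).1
    have : (N / n : ℝ) ≤ ((N / n : ℕ) : ℝ) + 1 := by
      rw [← Nat.floor_div_eq_div (K := ℝ)]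
      exact (Nat.lt_floor_add_one _).le
    calc _ = vonMangoldt n * (N / n : ℝ) := by ring
      _ ≤ vonMangoldt n * (((N / n : ℕ) : ℝ) + 1) := mul_le_mul_of_nonneg_left this vonMangoldt_nonneg
      _ = _ := by ring
  rw [abs_le]
  constructor
  · have : (N:ℝ) * (Real.log N - 1) ≤ N * ∑ n ∈ Finset.Ioc 0 N, vonMangoldt n / (n : ℝ) := by linarith
    have := le_of_mul_le_mul_left this hNr
    linarith
  · have : N * ∑ n ∈ Finset.Ioc 0 N, vonMangoldt n / (n : ℝ) ≤ (N:ℝ) * (Real.log N + (Real.log 4 + 4)) := by linarith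
    have := le_of_mul_le_mul_left this hNr
    linarith

open ArithmeticFunction in
lemma aux_mertens1' : ∃ C : ℝ, ∀ N : ℕ,
    ‖∑ n ∈ Finset.range N, ((if n.Prime then Real.log n / n else 0) - 1 / (n : ℝ))‖ ≤ C := by
  obtain ⟨C, hC⟩ := aux_mertens1
  have hs := vonMangoldt.summable_residueClass_non_primes_div (q := 1) 0
  have hr : ∀ n, vonMangoldt.residueClass (q := 1) 0 n = vonMangoldt n := by
    intro n
    simp only [vonMangoldt.residueClass]
    apply Set.indicator_of_mem
    exact Subsingleton.elim _ _
  simp only [hr] at hs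
  set D := ∑' n : ℕ, (if n.Prime then 0 else vonMangoldt n) / (n : ℝ) with hD
  have hnn : ∀ n : ℕ, 0 ≤ (if n.Prime then 0 else vonMangoldt n) / (n : ℝ) := by
    intro n
    split_ifs
    · simp
    · exact div_nonneg vonMangoldt_nonneg (by positivity)
  have hD0 : 0 ≤ D := tsum_nonneg hnn
  refine ⟨C + D + 1, fun N => ?_⟩
  rcases Nat.eq_zero_or_pos N with rfl | hN
  · simp; linarith [(abs_nonneg _).trans (hC 0)]
  obtain ⟨M, rfl⟩ : ∃ M, N = M + 1 := ⟨N - 1, by omega⟩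
  rw [Finset.range_eq_Ico, Finset.sum_eq_sum_Ico_succ_bot (by omega)]
  have hI : Finset.Ico (0+1) (M+1) = Finset.Ioc 0 M := by ext; simp; omega
  rw [hI]
  have h1 : ∑ n ∈ Finset.Ioc 0 M, ((if n.Prime then Real.log n / n else 0) - 1 / (n : ℝ))
    = ∑ n ∈ Finset.Ioc 0 M, vonMangoldt n / (n : ℝ) - ∑ n ∈ Finset.Ioc 0 M, (if n.Prime then 0 else vonMangoldt n) / (n : ℝ)
      - ∑ n ∈ Finset.Ioc 0 M, 1 / (n : ℝ) := by
    rw [← Finset.sum_sub_distrib, ← Finset.sum_sub_distrib]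
    apply Finset.sum_congr rfl
    intro n hn
    split_ifs with hp
    · rw [vonMangoldt_apply_prime hp]; simp
    · simp
  have h2 : ∑ n ∈ Finset.Ioc 0 M, 1 / (n : ℝ) = harmonic M := by
    rw [harmonic_eq_sum_Icc]; push_cast
    apply Finset.sum_congr _ (by simp)
    ext; simp; omega
  have h3 : ∑ n ∈ Finset.Ioc 0 M, (if n.Prime then 0 else vonMangoldt n) / (n : ℝ) ≤ D :=
    hs.sum_le_tsum _ (fun n _ => hnn n)
  have h4 : 0 ≤ ∑ n ∈ Finset.Ioc 0 M, (if n.Prime then 0 else vonMangoldt n) / (n : ℝ) :=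
    Finset.sum_nonneg (fun n _ => hnn n)
  have h5 := harmonic_le_one_add_log M
  have h6 := log_add_one_le_harmonic M
  have h7 : Real.log M ≤ Real.log ((M+1 : ℕ)) := by
    rcases Nat.eq_zero_or_pos M with rfl | hM
    · simp
    · apply Real.log_le_log (by exact_mod_cast hM); push_cast; linarith
  have h8 := abs_le.1 (hC M)
  rw [h1, h2]
  simp only [Nat.not_prime_zero, if_false, Nat.cast_zero, div_zero, sub_zero, zero_add]
  rw [Real.norm_eq_abs, abs_le]
  constructor <;> linarith [h8.1, h8.2]

/-- sum of `1/(n log n)` versus `log log`. -/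
lemma aux_loglog : ∃ l : ℝ, Tendsto (fun N : ℕ => ∑ n ∈ Finset.range N,
    1 / (((n + 2 : ℕ) : ℝ) * Real.log ((n + 2 : ℕ) : ℝ)) - Real.log (Real.log ((N + 2 : ℕ) : ℝ))) atTop (𝓝 l) := by
  set g : ℕ → ℝ := fun n => 1 / (((n + 2 : ℕ) : ℝ) * Real.log ((n + 2 : ℕ) : ℝ)) with hg
  set F : ℕ → ℝ := fun n => Real.log (Real.log ((n + 2 : ℕ) : ℝ)) with hF
  have hlog : ∀ n : ℕ, 0 < Real.log ((n + 2 : ℕ) : ℝ) := fun n =>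
    Real.log_pos (by push_cast; linarith [(Nat.cast_nonneg n : (0:ℝ) ≤ n)])
  -- mean value
  have hmv : ∀ n, g (n + 1) ≤ F (n + 1) - F n ∧ F (n + 1) - F n ≤ g n := by
    intro n
    have hn0 : (0 : ℝ) ≤ n := Nat.cast_nonneg n
    have hab : ((n + 2 : ℕ) : ℝ) < ((n + 1 + 2 : ℕ) : ℝ) := by push_cast; linarith
    have hd : ∀ x ∈ Set.Icc ((n + 2 : ℕ) : ℝ) ((n + 1 + 2 : ℕ) : ℝ),
        HasDerivAt (fun x => Real.log (Real.log x)) (x⁻¹ / Real.log x) x := by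
      intro x hx
      have hx1 : (1 : ℝ) < x := by
        have := hx.1; push_cast at this; linarith
      exact (Real.hasDerivAt_log (by linarith)).log (Real.log_pos hx1).ne'
    obtain ⟨x, hx, hxe⟩ := exists_hasDerivAt_eq_slope (fun x => Real.log (Real.log x))
      (fun x => x⁻¹ / Real.log x) hab
      (fun x hx => (hd x hx).continuousAt.continuousWithinAt)
      (fun x hx => hd x ⟨hx.1.le, hx.2.le⟩)
    have hden : ((n + 1 + 2 : ℕ) : ℝ) - ((n + 2 : ℕ) : ℝ) = 1 := by push_cast; ring
    simp only [hden, div_one] at hxe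
    have hx1 : (1 : ℝ) < x := by
      have := hx.1; push_cast at this; linarith
    have hlx := Real.log_pos hx1
    have e : F (n + 1) - F n = 1 / (x * Real.log x) := by
      simp only [hF]; rw [← hxe]; field_simp
    have hl1 : Real.log ((n + 2 : ℕ) : ℝ) ≤ Real.log x := Real.log_le_log (by positivity) hx.1.le
    have hl2 : Real.log x ≤ Real.log ((n + 1 + 2 : ℕ) : ℝ) := Real.log_le_log (by positivity) hx.2.le
    rw [e]
    constructor
    · exact one_div_le_one_div_of_le (by positivity) (mul_le_mul hx.2.le hl2 hlx.le (by positivity))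
    · exact one_div_le_one_div_of_le (mul_pos (by positivity) (hlog n))
        (mul_le_mul hx.1.le hl1 (hlog n).le (by positivity))
  have hg0 : ∀ n, 0 ≤ g n := fun n => by
    have := hlog n
    simp only [hg]; positivity
  have hmono : Monotone (fun N : ℕ => ∑ n ∈ Finset.range N, g n - F N) := by
    apply monotone_nat_of_le_succ
    intro n
    rw [Finset.sum_range_succ]
    linarith [(hmv n).2]
  have hbd : ∀ N : ℕ, ∑ n ∈ Finset.range N, g n - F N ≤ g 0 - F 0 - g N := by
    intro N
    induction N with
    | zero => simp
    | succ k ih =>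
      rw [Finset.sum_range_succ]
      linarith [(hmv k).1]
  refine ⟨_, tendsto_atTop_ciSup hmono ⟨g 0 - F 0, ?_⟩⟩
  rintro _ ⟨N, rfl⟩
  linarith [hbd N, hg0 N]

/-- Mertens' second theorem. -/
lemma aux_mertens2 : ∃ l : ℝ, Tendsto (fun N : ℕ => ∑ n ∈ Finset.range (N + 2),
    (if n.Prime then 1 / (n : ℝ) else 0) - Real.log (Real.log ((N + 2 : ℕ) : ℝ))) atTop (𝓝 l) := by
  obtain ⟨C, hC⟩ := aux_mertens1'
  obtain ⟨l, hl⟩ := aux_loglog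
  set z : ℕ → ℝ := fun n => (if n.Prime then Real.log n / n else 0) - 1 / (n : ℝ) with hz
  have hlog : ∀ n : ℕ, 0 < Real.log ((n + 2 : ℕ) : ℝ) := fun n =>
    Real.log_pos (by push_cast; linarith [(Nat.cast_nonneg n : (0:ℝ) ≤ n)])
  have hanti : Antitone (fun n : ℕ => 1 / Real.log ((n + 2 : ℕ) : ℝ)) := by
    intro a b hab
    apply one_div_le_one_div_of_le (hlog a)
    apply Real.log_le_log (by positivity)
    exact_mod_cast Nat.add_le_add_right hab 2
  have h0 : Tendsto (fun n : ℕ => 1 / Real.log ((n + 2 : ℕ) : ℝ)) atTop (𝓝 0) := by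
    have : Tendsto (fun n : ℕ => Real.log ((n + 2 : ℕ) : ℝ)) atTop atTop :=
      Real.tendsto_log_atTop.comp (tendsto_natCast_atTop_atTop.comp (tendsto_add_atTop_nat 2))
    simp only [one_div]
    exact this.inv_tendsto_atTop
  have hb : ∀ n, ‖∑ i ∈ Finset.range n, z (i + 2)‖ ≤ C + C := by
    intro n
    have := Finset.sum_range_add_sum_Ico z (show 2 ≤ n + 2 by omega)
    have e : ∑ i ∈ Finset.range n, z (i + 2) = ∑ i ∈ Finset.range (n + 2), z i - ∑ i ∈ Finset.range 2, z i := by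
      rw [← this, Finset.sum_Ico_eq_sum_range]
      simp [add_comm]
    rw [e]
    exact (norm_sub_le _ _).trans (add_le_add (hC _) (hC _))
  obtain ⟨l', hl'⟩ := cauchySeq_tendsto_of_complete
    (hanti.cauchySeq_series_mul_of_tendsto_zero_of_bounded h0 hb)
  refine ⟨l' + l, (hl'.add hl).congr fun N => ?_⟩
  rw [← add_sub_assoc, ← Finset.sum_add_distrib]
  congr 1
  rw [Finset.sum_range_succ', Finset.sum_range_succ']
  simp only [Nat.not_prime_zero, Nat.not_prime_one, if_false, zero_add, add_zero, add_assoc,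
    Nat.reduceAdd]
  apply Finset.sum_congr rfl
  intro n _
  have := hlog n
  simp only [hz, smul_eq_mul]
  have h2 : ((n + 2 : ℕ) : ℝ) ≠ 0 := by positivity
  split_ifs <;> field_simp <;> ring


/-- weights of the prime sum -/
noncomputable def aW (n : ℕ) : ℝ := if n.Prime then Real.log (1 + 1 / (n : ℝ)) else 0

lemma aux_log_bound {u : ℝ} (hu : 0 ≤ u) : u - u ^ 2 ≤ Real.log (1 + u) ∧ Real.log (1 + u) ≤ u := by
  have h1 := Real.one_sub_inv_le_log_of_pos (show 0 < 1 + u by linarith)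
  have h2 := Real.log_le_sub_one_of_pos (show 0 < 1 + u by linarith)
  refine ⟨le_trans ?_ h1, by linarith⟩
  have : 1 - (1 + u)⁻¹ - (u - u ^ 2) = u ^ 3 / (1 + u) := by field_simp; ring
  have h3 : 0 ≤ u ^ 3 / (1 + u) := by positivity
  linarith

lemma aW_nonneg (n : ℕ) : 0 ≤ aW n := by
  unfold aW; split_ifs
  · apply Real.log_nonneg
    have : (0:ℝ) ≤ 1 / n := by positivity
    linarith
  · exact le_rfl

lemma aW_le (n : ℕ) : aW n ≤ 1 / (n : ℝ) := by
  unfold aW; split_ifs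
  · exact (aux_log_bound (by positivity)).2
  · positivity

lemma aux_W : ∃ l : ℝ, Tendsto (fun x : ℝ => ∑ n ∈ Finset.range (⌊x⌋₊ + 1), aW n
    - Real.log (Real.log x)) atTop (𝓝 l) := by
  obtain ⟨l, hl⟩ := aux_mertens2
  have hsum : Summable (fun n : ℕ => aW n - (if n.Prime then 1 / (n : ℝ) else 0)) := by
    apply Summable.of_norm_bounded (g := fun n : ℕ => 1 / (n : ℝ) ^ 2)
    · exact Real.summable_one_div_nat_pow.2 (by norm_num)
    · intro n
      unfold aW
      split_ifs
      · have := aux_log_bound (u := 1 / (n:ℝ)) (by positivity)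
        rw [Real.norm_eq_abs, abs_le, ← one_div_pow]
        have h : 0 ≤ (1 / (n:ℝ)) ^ 2 := by positivity
        constructor <;> linarith
      · simp
  have h1 := hsum.hasSum.tendsto_sum_nat.comp (tendsto_add_atTop_nat 2)
  have h2 := (hl.add h1)
  have h3 : Tendsto (fun x : ℝ => ⌊x⌋₊ - 1) atTop atTop :=
    (tendsto_sub_atTop_nat 1).comp (tendsto_nat_floor_atTop)
  have h4 := h2.comp h3
  have h5 : Tendsto (fun x : ℝ => Real.log (Real.log (⌊x⌋₊ + 1)) - Real.log (Real.log x)) atTop (𝓝 0) := by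
    have hz : Tendsto (fun x : ℝ => 1 / Real.log x) atTop (𝓝 0) := by
      simp only [one_div]
      exact Real.tendsto_log_atTop.inv_tendsto_atTop
    refine tendsto_of_tendsto_of_tendsto_of_le_of_le' tendsto_const_nhds hz ?_ ?_
    · filter_upwards [eventually_gt_atTop 1] with x hx
      have := Nat.lt_floor_add_one x
      have h0 := Real.log_pos hx
      have : Real.log x ≤ Real.log (⌊x⌋₊ + 1) := Real.log_le_log (by linarith) this.le
      linarith [Real.log_le_log h0 this]
    · filter_upwards [eventually_gt_atTop 1] with x hx
      have hlt := Nat.lt_floor_add_one x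
      have hle := Nat.floor_le (show 0 ≤ x by linarith)
      have h0 := Real.log_pos hx
      have h1 : Real.log x ≤ Real.log (⌊x⌋₊ + 1) := Real.log_le_log (by linarith) hlt.le
      have h2 : Real.log (⌊x⌋₊ + 1) ≤ Real.log x + 1 := by
        calc Real.log (⌊x⌋₊ + 1) ≤ Real.log (x * (1 + 1)) :=
              Real.log_le_log (by linarith) (by linarith)
          _ = Real.log x + Real.log (1 + 1) := Real.log_mul (by linarith) (by norm_num)
          _ ≤ _ := by linarith [(aux_log_bound (u := 1) (by norm_num)).2]
      rw [← Real.log_div (by linarith) h0.ne']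
      have h3 := Real.log_le_sub_one_of_pos (show 0 < Real.log (⌊x⌋₊ + 1) / Real.log x by
        apply div_pos _ h0; linarith)
      refine h3.trans ?_
      rw [div_sub_one h0.ne']
      exact div_le_div_of_nonneg_right (by linarith) h0.le
  refine ⟨_, (h4.add h5).congr' ?_⟩
  filter_upwards [eventually_ge_atTop 1] with x hx
  have hx1 : 1 ≤ ⌊x⌋₊ := Nat.le_floor (by simpa using hx)
  have e : ⌊x⌋₊ - 1 + 2 = ⌊x⌋₊ + 1 := by omega
  simp only [Function.comp, e, Finset.sum_sub_distrib]
  push_cast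
  ring

lemma aux_H : Tendsto (fun t : ℝ => ∑ n ∈ Finset.range (⌊t⌋₊ + 1), 1 / (n : ℝ) - Real.log t) atTop
    (𝓝 Real.eulerMascheroniConstant) := by
  have h1 := Real.tendsto_harmonic_sub_log.comp (tendsto_nat_floor_atTop (α := ℝ))
  have h2 : Tendsto (fun t : ℝ => Real.log (⌊t⌋₊ / t)) atTop (𝓝 0) := by
    have := (Real.continuousAt_log one_ne_zero).tendsto.comp (tendsto_nat_floor_div_atTop (R := ℝ))
    rw [Real.log_one] at this
    exact this
  rw [← add_zero Real.eulerMascheroniConstant]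
  refine (h1.add h2).congr' ?_
  filter_upwards [eventually_ge_atTop 1] with x hx
  have hx1 : 1 ≤ ⌊x⌋₊ := Nat.le_floor (by simpa using hx)
  have hx2 : (⌊x⌋₊ : ℝ) ≠ 0 := by exact_mod_cast (by omega)
  rw [Real.log_div hx2 (by linarith), Finset.sum_range_succ']
  simp [harmonic]

/-- the difference function -/
noncomputable def gG (t : ℝ) : ℝ := ∑ n ∈ Finset.range (⌊Real.exp t⌋₊ + 1), aW n
  - ∑ n ∈ Finset.range (⌊t⌋₊ + 1), 1 / (n : ℝ)

lemma gG_tendsto : ∃ l : ℝ, Tendsto (fun x : ℝ => ∑ n ∈ Finset.range (⌊x⌋₊ + 1), aW n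
    - Real.log (Real.log x)) atTop (𝓝 l) ∧ Tendsto gG atTop (𝓝 (l - Real.eulerMascheroniConstant)) := by
  obtain ⟨l, hl⟩ := aux_W
  refine ⟨l, hl, ?_⟩
  refine ((hl.comp Real.tendsto_exp_atTop).sub aux_H).congr fun t => ?_
  simp [gG]

lemma gG_meas : Measurable gG := by
  unfold gG
  apply Measurable.sub
  · exact (measurable_from_nat (f := fun k => ∑ n ∈ Finset.range (k + 1), aW n)).comp
      (Nat.measurable_floor.comp Real.measurable_exp)
  · exact (measurable_from_nat (f := fun k => ∑ n ∈ Finset.range (k + 1), 1 / (n : ℝ))).comp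
      Nat.measurable_floor

lemma gG_bdd : ∃ B : ℝ, ∀ t, 0 ≤ t → |gG t| ≤ B := by
  obtain ⟨l, -, h⟩ := gG_tendsto
  have h1 := (h.abs).eventually (eventually_le_nhds (show _ < |l - Real.eulerMascheroniConstant| + 1 by linarith))
  obtain ⟨T, hT⟩ := eventually_atTop.1 h1
  set P := ∑ n ∈ Finset.range (⌊Real.exp T⌋₊ + 1), aW n
  set Q := ∑ n ∈ Finset.range (⌊T⌋₊ + 1), 1 / (n : ℝ)
  have hP : 0 ≤ P := Finset.sum_nonneg fun n _ => aW_nonneg n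
  have hQ : 0 ≤ Q := Finset.sum_nonneg fun n _ => by positivity
  refine ⟨|l - Real.eulerMascheroniConstant| + 1 + P + Q, fun t ht => ?_⟩
  rcases le_total T t with h2 | h2
  · linarith [hT t h2]
  · have a1 : ∑ n ∈ Finset.range (⌊Real.exp t⌋₊ + 1), aW n ≤ P := by
      apply Finset.sum_le_sum_of_subset_of_nonneg
      · apply Finset.range_mono
        have := Nat.floor_le_floor (Real.exp_le_exp.2 h2)
        omega
      · intro n _ _; exact aW_nonneg n
    have a2 : ∑ n ∈ Finset.range (⌊t⌋₊ + 1), 1 / (n : ℝ) ≤ Q := by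
      apply Finset.sum_le_sum_of_subset_of_nonneg
      · apply Finset.range_mono
        have := Nat.floor_le_floor h2
        omega
      · intro n _ _; positivity
    have a3 : 0 ≤ ∑ n ∈ Finset.range (⌊Real.exp t⌋₊ + 1), aW n := Finset.sum_nonneg fun n _ => aW_nonneg n
    have a4 : 0 ≤ ∑ n ∈ Finset.range (⌊t⌋₊ + 1), 1 / (n : ℝ) := Finset.sum_nonneg fun n _ => by positivity
    have := abs_nonneg (l - Real.eulerMascheroniConstant)
    unfold gG
    rw [abs_le]; constructor <;> linarith

open MeasureTheory in
lemma abel_limit {L : ℝ} (h : Tendsto gG atTop (𝓝 L)) :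
    Tendsto (fun s : ℝ => ∫ v in Set.Ioi (0:ℝ), Real.exp (-v) * gG (v / s)) (𝓝[>] 0) (𝓝 L) := by
  obtain ⟨B, hB⟩ := gG_bdd
  have e : L = ∫ v in Set.Ioi (0:ℝ), Real.exp (-v) * L := by
    rw [integral_mul_const, integral_exp_neg_Ioi_zero, one_mul]
  rw [e]
  apply tendsto_integral_filter_of_dominated_convergence (fun v => Real.exp (-v) * B)
  · refine Eventually.of_forall fun s => ?_
    apply Measurable.aestronglyMeasurable
    exact (Real.measurable_exp.comp measurable_neg).mul (gG_meas.comp (measurable_id.div_const s))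
  · filter_upwards [self_mem_nhdsWithin] with s hs
    filter_upwards [ae_restrict_mem measurableSet_Ioi] with v hv
    rw [norm_mul, Real.norm_eq_abs, Real.norm_eq_abs, abs_of_pos (Real.exp_pos _)]
    exact mul_le_mul_of_nonneg_left (hB _ (div_nonneg (le_of_lt hv) (le_of_lt hs))) (Real.exp_pos _).le
  · exact (integrableOn_exp_neg_Ioi 0).mul_const B
  · filter_upwards [ae_restrict_mem measurableSet_Ioi] with v hv
    apply Tendsto.const_mul
    have h1 : Tendsto (fun s : ℝ => v / s) (𝓝[>] 0) atTop := by
      simp only [div_eq_mul_inv]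
      exact tendsto_inv_nhdsGT_zero.const_mul_atTop hv
    exact h.comp h1

open MeasureTheory in
lemma step_int (a c : ℝ) (hc : 0 ≤ c) :
    IntegrableOn (fun v : ℝ => Real.exp (-v) * (if c ≤ v then a else 0)) (Set.Ioi 0) ∧
    ∫ v in Set.Ioi (0:ℝ), Real.exp (-v) * (if c ≤ v then a else 0) = a * Real.exp (-c) := by
  have e : (fun v : ℝ => Real.exp (-v) * (if c ≤ v then a else 0))
      = Set.indicator (Set.Ici c) (fun v => Real.exp (-v) * a) := by
    ext v
    simp [Set.indicator_apply]
  constructor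
  · rw [e]
    exact ((integrableOn_exp_neg_Ioi 0).mul_const a).indicator measurableSet_Ici
  · rw [e, ← integral_Ici_eq_integral_Ioi, setIntegral_indicator measurableSet_Ici]
    have : Set.Ici (0:ℝ) ∩ Set.Ici c = Set.Ici c := by
      rw [Set.inter_eq_right]; exact Set.Ici_subset_Ici.2 hc
    rw [this, integral_mul_const, integral_Ici_eq_integral_Ioi, integral_exp_neg_Ioi, mul_comm]

open MeasureTheory in
lemma abel_id {s : ℝ} (hs : 0 < s) :
    Summable (fun n : ℕ => aW n * Real.exp (-(s * Real.log n))) ∧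
    ∫ v in Set.Ioi (0:ℝ), Real.exp (-v) * gG (v / s) =
      ∑' n : ℕ, aW n * Real.exp (-(s * Real.log n)) + Real.log (1 - Real.exp (-s)) := by
  have hA : Summable (fun n : ℕ => aW n * Real.exp (-(s * Real.log n))) := by
    apply Summable.of_nonneg_of_le (f := fun n : ℕ => 1 / (n : ℝ) ^ (1 + s))
    · intro n; exact mul_nonneg (aW_nonneg n) (Real.exp_pos _).le
    · intro n
      rcases Nat.eq_zero_or_pos n with rfl | hn
      · simp [aW]; positivity
      have hn' : (0:ℝ) < n := by exact_mod_cast hn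
      rw [Real.rpow_add hn', Real.rpow_one, Real.exp_neg, mul_comm s, Real.exp_mul, Real.exp_log hn',
        one_div, mul_inv]
      exact mul_le_mul_of_nonneg_right ((aW_le n).trans_eq (one_div _)) (by positivity)
    · exact Real.summable_one_div_nat_rpow.2 (by linarith)
  refine ⟨hA, ?_⟩
  have hBs : HasSum (fun n : ℕ => 1 / (n : ℝ) * Real.exp (-(s * n))) (-Real.log (1 - Real.exp (-s))) := by
    have := Real.hasSum_pow_div_log_of_abs_lt_one (x := Real.exp (-s)) (by
      rw [abs_of_pos (Real.exp_pos _)]; exact Real.exp_lt_one_iff.2 (by linarith))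
    rw [← hasSum_nat_add_iff' 1]
    simp only [Finset.sum_range_one, Nat.cast_zero, div_zero, zero_mul, sub_zero]
    refine this.congr_fun ?_
    intro n
    rw [← Real.exp_nat_mul]
    push_cast
    rw [show -(s * ((n:ℝ) + 1)) = ((n:ℝ) + 1) * -s by ring]
    ring
  set F : ℕ → ℝ → ℝ := fun n v => Real.exp (-v) * (if s * Real.log n ≤ v then aW n else 0)
    - Real.exp (-v) * (if s * n ≤ v then 1 / (n : ℝ) else 0) with hF
  have i1 : ∀ n : ℕ, 0 ≤ s * Real.log n := fun n => mul_nonneg hs.le (Real.log_natCast_nonneg n)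
  have i2 : ∀ n : ℕ, 0 ≤ s * (n:ℝ) := fun n => by positivity
  have hint : ∀ n, IntegrableOn (F n) (Set.Ioi 0) := fun n =>
    (step_int _ _ (i1 n)).1.sub (step_int _ _ (i2 n)).1
  have hval : ∀ n, ∫ v in Set.Ioi (0:ℝ), F n v =
      aW n * Real.exp (-(s * Real.log n)) - 1 / (n : ℝ) * Real.exp (-(s * n)) := fun n => by
    simp only [hF]
    rw [integral_sub (step_int _ _ (i1 n)).1 (step_int _ _ (i2 n)).1, (step_int _ _ (i1 n)).2,
      (step_int _ _ (i2 n)).2]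
  have hnorm : Summable (fun n => ∫ v in Set.Ioi (0:ℝ), ‖F n v‖) := by
    apply Summable.of_nonneg_of_le (f := fun n : ℕ =>
      aW n * Real.exp (-(s * Real.log n)) + 1 / (n : ℝ) * Real.exp (-(s * n)))
    · intro n; exact integral_nonneg fun v => norm_nonneg _
    · intro n
      rw [← (step_int (aW n) _ (i1 n)).2, ← (step_int (1 / (n:ℝ)) _ (i2 n)).2,
        ← integral_add (step_int _ _ (i1 n)).1 (step_int _ _ (i2 n)).1]
      apply integral_mono (hint n).norm ((step_int _ _ (i1 n)).1.add (step_int _ _ (i2 n)).1)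
      intro v
      refine (norm_sub_le _ _).trans (le_of_eq ?_)
      simp only [Pi.add_apply]
      congr 1
      · rw [Real.norm_of_nonneg]
        apply mul_nonneg (Real.exp_pos _).le
        split_ifs
        · exact aW_nonneg n
        · exact le_rfl
      · rw [Real.norm_of_nonneg]
        apply mul_nonneg (Real.exp_pos _).le
        split_ifs <;> positivity
    · exact hA.add hBs.summable
  have main := hasSum_integral_of_summable_integral_norm hint hnorm
  simp only [hval] at main
  have h2 := hA.hasSum.sub hBs
  rw [← sub_neg_eq_add, h2.unique main]
  apply setIntegral_congr_fun measurableSet_Ioi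
  intro v hv
  have hv' : (0:ℝ) < v := hv
  have hvs : 0 ≤ v / s := by positivity
  simp only [hF, gG]
  have t1 : HasSum (fun n : ℕ => if s * Real.log n ≤ v then aW n else 0)
      (∑ n ∈ Finset.range (⌊Real.exp (v / s)⌋₊ + 1), aW n) := by
    have := hasSum_sum_of_ne_finset_zero (L := .unconditional ℕ) (f := fun n : ℕ => if s * Real.log n ≤ v then aW n else 0)
      (s := Finset.range (⌊Real.exp (v / s)⌋₊ + 1)) (by
        intro n hn
        rw [if_neg]
        intro h
        apply hn
        rw [Finset.mem_range, Nat.lt_succ_iff]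
        apply Nat.le_floor
        rcases Nat.eq_zero_or_pos n with rfl | hn0
        · simp; positivity
        rw [← Real.log_le_iff_le_exp (by exact_mod_cast hn0), le_div_iff₀ hs]
        linarith)
    convert this using 1
    apply Finset.sum_congr rfl
    intro n hn
    rw [if_pos]
    rw [Finset.mem_range, Nat.lt_succ_iff, Nat.le_floor_iff (Real.exp_pos _).le] at hn
    rcases Nat.eq_zero_or_pos n with rfl | hn0
    · simp; exact hv'.le
    rw [← Real.log_le_iff_le_exp (by exact_mod_cast hn0), le_div_iff₀ hs] at hn
    linarith
  have t2 : HasSum (fun n : ℕ => if s * n ≤ v then 1 / (n:ℝ) else 0)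
      (∑ n ∈ Finset.range (⌊v / s⌋₊ + 1), 1 / (n : ℝ)) := by
    have := hasSum_sum_of_ne_finset_zero (L := .unconditional ℕ) (f := fun n : ℕ => if s * n ≤ v then 1 / (n:ℝ) else 0)
      (s := Finset.range (⌊v / s⌋₊ + 1)) (by
        intro n hn
        rw [if_neg]
        intro h
        apply hn
        rw [Finset.mem_range, Nat.lt_succ_iff]
        apply Nat.le_floor
        rw [le_div_iff₀ hs]
        linarith)
    convert this using 1
    apply Finset.sum_congr rfl
    intro n hn
    rw [if_pos]
    rw [Finset.mem_range, Nat.lt_succ_iff, Nat.le_floor_iff hvs, le_div_iff₀ hs] at hn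
    linarith
  rw [((t1.mul_left _).sub (t2.mul_left _)).tsum_eq]
  ring


/-- real zeta -/
noncomputable def zr (x : ℝ) : ℝ := ∑' n : ℕ, 1 / (n : ℝ) ^ x

lemma zr_pos {x : ℝ} (hx : 1 < x) : 0 < zr x := by
  have hs := Real.summable_one_div_nat_rpow.2 hx
  exact hs.tsum_pos (fun n => by positivity) 1 (by simp)

/-- the completely multiplicative function -/
noncomputable def zhom {x : ℝ} (hx : 1 < x) : ℕ →*₀ ℝ where
  toFun n := 1 / (n : ℝ) ^ x
  map_zero' := by simp [Real.zero_rpow (by linarith : x ≠ 0)]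
  map_one' := by simp
  map_mul' a b := by
    push_cast
    rw [Real.mul_rpow (by positivity) (by positivity)]
    field_simp

lemma prime_rpow_lt {n : ℕ} (hn : n.Prime) {x : ℝ} (hx : 0 < x) :
    0 < 1 / (n : ℝ) ^ x ∧ 1 / (n : ℝ) ^ x < 1 := by
  have h1 : (1:ℝ) < n := by exact_mod_cast hn.one_lt
  have := Real.one_lt_rpow h1 hx
  exact ⟨by positivity, by rw [div_lt_one (by positivity)]; exact this⟩

lemma log_zr {x : ℝ} (hx : 1 < x) :
    HasSum (fun n : ℕ => if n.Prime then -Real.log (1 - 1 / (n : ℝ) ^ x) else 0) (Real.log (zr x)) := by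
  have hs : Summable (fun n => ‖zhom hx n‖) := by
    have := Real.summable_one_div_nat_rpow.2 hx
    exact this.norm
  have hp := EulerProduct.eulerProduct_completely_multiplicative_hasProd hs
  have h1 : HasSum (fun p : Nat.Primes => -Real.log (1 - 1 / ((p : ℕ) : ℝ) ^ x)) (Real.log (zr x)) := by
    have hz : zr x ≠ 0 := (zr_pos hx).ne'
    have h2 := (Real.continuousAt_log hz).tendsto.comp hp
    refine Tendsto.congr (fun s => ?_) h2
    simp only [Function.comp]
    rw [Real.log_prod]
    · apply Finset.sum_congr rfl
      intro p _
      rw [Real.log_inv]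
      rfl
    · intro p _
      have := (prime_rpow_lt p.2 (show 0 < x by linarith)).2
      exact inv_ne_zero (sub_ne_zero.2 (ne_of_gt this))
  have h3 := (hasSum_subtype_iff_indicator (s := {p : ℕ | p.Prime})
    (f := fun n : ℕ => -Real.log (1 - 1 / (n : ℝ) ^ x))).1 h1
  convert h3 using 1
  ext n
  simp [Set.indicator_apply]

lemma log_zr2 {x : ℝ} (hx : 1 < x) :
    HasSum (fun n : ℕ => if n.Prime then Real.log (1 + 1 / (n : ℝ) ^ x) else 0)
      (Real.log (zr x) - Real.log (zr (2 * x))) := by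
  have h := (log_zr hx).sub (log_zr (show 1 < 2 * x by linarith))
  refine h.congr_fun fun n => ?_
  split_ifs with hn
  · obtain ⟨h1, h2⟩ := prime_rpow_lt hn (show 0 < x by linarith)
    have e : 1 / (n : ℝ) ^ (2 * x) = (1 / (n : ℝ) ^ x) ^ 2 := by
      rw [mul_comm, Real.rpow_mul (by positivity)]
      simp
    rw [e]
    set u := 1 / (n : ℝ) ^ x
    rw [show 1 - u ^ 2 = (1 - u) * (1 + u) by ring, Real.log_mul (by linarith) (by linarith)]
    ring
  · simp

lemma lim_diff : Tendsto (fun s : ℝ => ∑' n : ℕ, (aW n * Real.exp (-(s * Real.log n)) -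
    if n.Prime then Real.log (1 + 1 / (n : ℝ) ^ (1 + s)) else 0)) (𝓝[>] 0) (𝓝 0) := by
  rw [show (0:ℝ) = ∑' n : ℕ, (0:ℝ) by simp]
  rw [show (∑' n : ℕ, (0:ℝ)) = 0 by simp]
  rw [show (𝓝 (0:ℝ)) = 𝓝 (∑' n : ℕ, (0:ℝ)) by simp]
  apply tendsto_tsum_of_dominated_convergence (bound := fun n : ℕ => 2 * (1 / (n:ℝ) ^ 2))
  · exact (Real.summable_one_div_nat_pow.2 (by norm_num)).mul_left 2
  · intro n
    unfold aW
    split_ifs with hn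
    · have hn0 : (0:ℝ) < n := by exact_mod_cast hn.pos
      have hc : ContinuousAt (fun s : ℝ => Real.log (1 + 1 / (n:ℝ)) * Real.exp (-(s * Real.log n)) -
          Real.log (1 + 1 / (n : ℝ) ^ (1 + s))) 0 := by
        have h1 : ContinuousAt (fun s : ℝ => (n:ℝ) ^ (1 + s)) 0 :=
          (Real.continuousAt_const_rpow hn0.ne').comp (by fun_prop)
        have h2 : ContinuousAt (fun s : ℝ => Real.log (1 + 1 / (n : ℝ) ^ (1 + s))) 0 := by
          apply ContinuousAt.log
          · apply ContinuousAt.add (by fun_prop)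
            apply ContinuousAt.div (by fun_prop) h1
            positivity
          · positivity
        exact ContinuousAt.sub (by fun_prop) h2
      have := hc.tendsto
      simp only [zero_mul, neg_zero, Real.exp_zero, mul_one, add_zero, Real.rpow_one, sub_self] at this
      exact this.mono_left nhdsWithin_le_nhds
    · simp
  · filter_upwards [self_mem_nhdsWithin] with s hs n
    have hs' : (0:ℝ) < s := hs
    unfold aW
    split_ifs with hn
    · have hn0 : (0:ℝ) < n := by exact_mod_cast hn.pos
      obtain ⟨a1, a2⟩ := aux_log_bound (u := 1 / (n:ℝ)) (by positivity)
      obtain ⟨b1, b2⟩ := aux_log_bound (u := 1 / (n:ℝ) ^ (1 + s)) (by positivity)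
      obtain ⟨c1, c2⟩ := prime_rpow_lt hn hs'
      have e : Real.exp (-(s * Real.log n)) = 1 / (n:ℝ) ^ s := by
        rw [Real.exp_neg, mul_comm s, Real.exp_mul, Real.exp_log hn0, one_div]
      have e2 : 1 / (n:ℝ) ^ (1 + s) = 1 / (n:ℝ) * (1 / (n:ℝ) ^ s) := by
        rw [Real.rpow_add hn0, Real.rpow_one]; field_simp
      rw [e2] at b1 b2
      rw [e, e2, ← one_div_pow]
      set w := 1 / (n:ℝ) ^ s
      set u := 1 / (n:ℝ)
      have hu : 0 ≤ u := by positivity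
      have d1 : (u - u ^ 2) * w ≤ Real.log (1 + u) * w := mul_le_mul_of_nonneg_right a1 c1.le
      have d2 : Real.log (1 + u) * w ≤ u * w := mul_le_mul_of_nonneg_right a2 c1.le
      have d3 : u ^ 2 * w ≤ u ^ 2 := mul_le_of_le_one_right (by positivity) c2.le
      have d4 : (u * w) ^ 2 ≤ u ^ 2 := by
        apply pow_le_pow_left₀ (by positivity)
        exact mul_le_of_le_one_right hu c2.le
      rw [Real.norm_eq_abs, abs_le]
      constructor <;> nlinarith [sq_nonneg u]
    · simp

lemma mertens3_log : Tendsto (fun x : ℝ => ∑ n ∈ Finset.range (⌊x⌋₊ + 1), aW n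
    - Real.log (Real.log x)) atTop (𝓝 (Real.eulerMascheroniConstant - Real.log (zr 2))) := by
  obtain ⟨l, hl, hG⟩ := gG_tendsto
  have h1 := abel_limit hG
  have t1 : Tendsto (fun s : ℝ => Real.log s + Real.log (zr (1 + s))) (𝓝[>] 0) (𝓝 0) := by
    have a : Tendsto (fun s : ℝ => 1 + s) (𝓝[>] 0) (𝓝[>] 1) := by
      apply tendsto_nhdsWithin_of_tendsto_nhds_of_eventually_within
      · have : ContinuousAt (fun s : ℝ => 1 + s) 0 := by fun_prop
        have := this.tendsto
        rw [add_zero] at this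
        exact this.mono_left nhdsWithin_le_nhds
      · filter_upwards [self_mem_nhdsWithin] with s hs
        have hs' : (0:ℝ) < s := hs
        simpa using hs'
    have b := (Real.continuousAt_log one_ne_zero).tendsto.comp (tendsto_sub_mul_tsum_nat_rpow.comp a)
    rw [Real.log_one] at b
    refine b.congr' ?_
    filter_upwards [self_mem_nhdsWithin] with s hs
    have hs' : (0:ℝ) < s := hs
    simp only [Function.comp]
    rw [show 1 + s - 1 = s by ring]
    exact Real.log_mul hs'.ne' (zr_pos (show 1 < 1 + s by linarith)).ne'
  have t2 : Tendsto (fun s : ℝ => Real.log (1 - Real.exp (-s)) - Real.log s) (𝓝[>] 0) (𝓝 0) := by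
    have hd : HasDerivAt (fun s : ℝ => 1 - Real.exp (-s)) 1 0 := by
      have := ((hasDerivAt_neg (0:ℝ)).exp).const_sub 1
      simpa using this
    have a := hd.tendsto_slope_zero_right
    have b := (Real.continuousAt_log one_ne_zero).tendsto.comp a
    rw [Real.log_one] at b
    refine b.congr' ?_
    filter_upwards [self_mem_nhdsWithin] with s hs
    have hs' : (0:ℝ) < s := hs
    have : Real.exp (-s) < 1 := Real.exp_lt_one_iff.2 (by linarith)
    simp only [Function.comp, zero_add, neg_zero, Real.exp_zero, sub_self, sub_zero, smul_eq_mul]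
    rw [Real.log_mul (by positivity) (by linarith), Real.log_inv]
    ring
  have t3 : Tendsto (fun s : ℝ => zr (2 * (1 + s))) (𝓝[>] 0) (𝓝 (zr 2)) := by
    unfold zr
    apply tendsto_tsum_of_dominated_convergence (bound := fun n : ℕ => 1 / (n:ℝ) ^ (2:ℝ))
    · exact Real.summable_one_div_nat_rpow.2 (by norm_num)
    · intro n
      rcases Nat.eq_zero_or_pos n with rfl | hn
      · refine Tendsto.congr' ?_ tendsto_const_nhds
        filter_upwards [self_mem_nhdsWithin] with s hs
        have hs' : (0:ℝ) < s := hs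
        simp [Real.zero_rpow (show 2 * (1 + s) ≠ 0 by positivity)]
      have hn0 : (0:ℝ) < n := by exact_mod_cast hn
      have h1 : ContinuousAt (fun s : ℝ => (n:ℝ) ^ (2 * (1 + s))) 0 :=
          (Real.continuousAt_const_rpow hn0.ne').comp (by fun_prop)
      have h2 : ContinuousAt (fun s : ℝ => 1 / (n:ℝ) ^ (2 * (1 + s))) 0 :=
        ContinuousAt.div (by fun_prop) h1 (by positivity)
      have := h2.tendsto
      simp only [add_zero, mul_one] at this
      exact this.mono_left nhdsWithin_le_nhds
    · filter_upwards [self_mem_nhdsWithin] with s hs n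
      have hs' : (0:ℝ) < s := hs
      rcases Nat.eq_zero_or_pos n with rfl | hn
      · simp [Real.zero_rpow (show 2 * (1 + s) ≠ 0 by positivity)]
      have hn0 : (1:ℝ) ≤ n := by exact_mod_cast hn
      rw [Real.norm_of_nonneg (by positivity)]
      apply one_div_le_one_div_of_le (by positivity)
      exact Real.rpow_le_rpow_of_exponent_le hn0 (by linarith)
  have t4 := (Real.continuousAt_log (zr_pos (show (1:ℝ) < 2 by norm_num)).ne').tendsto.comp t3
  have t5 := ((lim_diff.add t1).add t2).sub t4
  have h2 : Tendsto (fun s : ℝ => ∫ v in Set.Ioi (0:ℝ), Real.exp (-v) * gG (v / s)) (𝓝[>] 0)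
      (𝓝 (0 + 0 + 0 - Real.log (zr 2))) := by
    refine t5.congr' ?_
    filter_upwards [self_mem_nhdsWithin] with s hs
    have hs' : (0:ℝ) < s := hs
    obtain ⟨a1, a2⟩ := abel_id hs'
    have a3 := log_zr2 (show 1 < 1 + s by linarith)
    rw [a2, (a1.hasSum.sub a3).tsum_eq]
    simp only [Function.comp]
    ring
  have := tendsto_nhds_unique h1 h2
  have e : l = Real.eulerMascheroniConstant - Real.log (zr 2) := by linarith
  rwa [← e]


open ArithmeticFunction in
lemma sqf_ident {n N : ℕ} (hn : 0 < n) (hN : n ≤ N) :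
    ∑ d ∈ (Finset.Ioc 0 N).filter (fun d => d ^ 2 ∣ n), moebius d = if Squarefree n then 1 else 0 := by
  obtain ⟨a, b, hab, ha⟩ := Nat.sq_mul_squarefree n
  have hb : 0 < b := by
    rcases Nat.eq_zero_or_pos b with rfl | h
    · simp at hab; omega
    · exact h
  have hset : (Finset.Ioc 0 N).filter (fun d => d ^ 2 ∣ n) = b.divisors := by
    ext d
    simp only [Finset.mem_filter, Finset.mem_Ioc, Nat.mem_divisors]
    constructor
    · rintro ⟨⟨hd, -⟩, h⟩
      refine ⟨?_, hb.ne'⟩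
      obtain ⟨g, d', b', hg, hco, rfl, rfl⟩ := Nat.exists_coprime' (m := d) (n := b) (Nat.gcd_pos_of_pos_left _ hd)
      have h2 : d' ^ 2 * g ^ 2 ∣ (b' ^ 2 * a) * g ^ 2 := by
        convert h using 1
        · ring
        · rw [← hab]; ring
      have h3 := Nat.dvd_of_mul_dvd_mul_right (by positivity) h2
      have h4 : d' ^ 2 ∣ a := (Nat.Coprime.pow 2 2 hco).dvd_of_dvd_mul_left h3
      have h5 := ha d' (by rwa [← sq])
      rw [Nat.isUnit_iff] at h5
      subst h5
      simp
    · rintro ⟨h, -⟩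
      have hd : 0 < d := Nat.pos_of_dvd_of_pos h hb
      have h2 : d ^ 2 ∣ n := by
        rw [← hab]; exact (pow_dvd_pow_of_dvd h 2).mul_right a
      refine ⟨⟨hd, ?_⟩, h2⟩
      have := Nat.le_of_dvd hn h2
      nlinarith
  rw [hset, ← coe_mul_zeta_apply, moebius_mul_coe_zeta, one_apply]
  congr 1
  rw [eq_iff_iff]
  constructor
  · rintro rfl; rw [← hab]; simpa using ha
  · intro h
    have := h b (by rw [← hab, ← sq]; exact Dvd.intro _ rfl)
    simpa [Nat.isUnit_iff] using this

/-- number of squarefree integers in `[1,N]` -/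
noncomputable def sqc (N : ℕ) : ℕ := ((Finset.Ioc 0 N).filter Squarefree).card

open ArithmeticFunction in
lemma sqc_eq (N : ℕ) : (sqc N : ℝ) = ∑' d : ℕ, (moebius d : ℝ) * ((N / d ^ 2 : ℕ) : ℝ) := by
  have h1 : (sqc N : ℤ) = ∑ d ∈ Finset.Ioc 0 N, moebius d * ((N / d ^ 2 : ℕ) : ℤ) := by
    calc (sqc N : ℤ) = ∑ n ∈ Finset.Ioc 0 N, if Squarefree n then 1 else 0 := by
          simp [sqc]
      _ = ∑ n ∈ Finset.Ioc 0 N, ∑ d ∈ Finset.Ioc 0 N, if d ^ 2 ∣ n then moebius d else 0 := by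
          apply Finset.sum_congr rfl
          intro n hn
          rw [Finset.mem_Ioc] at hn
          rw [← sqf_ident hn.1 hn.2, Finset.sum_filter]
      _ = ∑ d ∈ Finset.Ioc 0 N, ∑ n ∈ Finset.Ioc 0 N, if d ^ 2 ∣ n then moebius d else 0 := Finset.sum_comm
      _ = _ := by
          apply Finset.sum_congr rfl
          intro d hd
          rw [← Finset.sum_filter, Finset.sum_const, Nat.Ioc_filter_dvd_card_eq_div]
          simp [mul_comm]
  rw [tsum_eq_sum (s := Finset.Ioc 0 N)]
  · have h2 := congrArg (Int.cast : ℤ → ℝ) h1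
    rw [Int.cast_sum] at h2
    simp only [Int.cast_mul, Int.cast_natCast] at h2
    exact h2
  · intro d hd
    rw [Finset.mem_Ioc] at hd
    rcases Nat.eq_zero_or_pos d with rfl | h
    · simp
    · have : N / d ^ 2 = 0 := Nat.div_eq_of_lt (by nlinarith [not_and.1 hd h])
      simp [this]

open ArithmeticFunction in
lemma mu_sum : ∑' d : ℕ, (moebius d : ℝ) * (1 / (d:ℝ) ^ 2) = 1 / zr 2 := by
  have h := LSeries_one_mul_Lseries_moebius (s := 2) (by norm_num)
  have e1 : LSeries 1 2 = ((zr 2 : ℝ) : ℂ) := by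
    unfold LSeries zr
    rw [Complex.ofReal_tsum]
    apply tsum_congr
    intro n
    rcases Nat.eq_zero_or_pos n with rfl | hn
    · simp
    · rw [LSeries.term_of_ne_zero hn.ne']
      norm_num
  have e2 : LSeries (fun n => ((moebius n : ℤ) : ℂ)) 2 = ((∑' d : ℕ, (moebius d : ℝ) * (1 / (d:ℝ) ^ 2) : ℝ) : ℂ) := by
    unfold LSeries
    rw [Complex.ofReal_tsum]
    apply tsum_congr
    intro n
    rcases Nat.eq_zero_or_pos n with rfl | hn
    · simp
    · rw [LSeries.term_of_ne_zero hn.ne']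
      push_cast
      rw [div_eq_mul_one_div]
      norm_cast
  rw [e1, e2] at h
  have h' : zr 2 * (∑' d : ℕ, (moebius d : ℝ) * (1 / (d:ℝ) ^ 2)) = 1 := by exact_mod_cast h
  have := (zr_pos (show (1:ℝ) < 2 by norm_num)).ne'
  rw [eq_div_iff this, mul_comm]
  exact h'

open ArithmeticFunction in
lemma sqc_lim : Tendsto (fun y : ℝ => (sqc ⌊y⌋₊ : ℝ) / y) atTop (𝓝 (1 / zr 2)) := by
  have h : ∀ y : ℝ, (sqc ⌊y⌋₊ : ℝ) / y = ∑' d : ℕ, (moebius d : ℝ) * (((⌊y⌋₊ / d ^ 2 : ℕ) : ℝ) / y) := by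
    intro y
    rw [sqc_eq, div_eq_mul_inv, ← tsum_mul_right]
    apply tsum_congr; intro d; ring
  simp only [h]
  rw [← mu_sum]
  have hfl : ∀ (y : ℝ) (d : ℕ), ((⌊y⌋₊ / d ^ 2 : ℕ) : ℝ) = (⌊1 / (d:ℝ) ^ 2 * y⌋₊ : ℝ) := by
    intro y d
    rw [← Nat.floor_div_natCast]
    congr 2
    push_cast; ring
  apply tendsto_tsum_of_dominated_convergence (bound := fun d : ℕ => 1 / (d:ℝ) ^ 2)
  · exact Real.summable_one_div_nat_pow.2 (by norm_num)
  · intro d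
    apply Tendsto.const_mul
    simp only [hfl]
    exact tendsto_nat_floor_mul_div_atTop (by positivity)
  · filter_upwards [eventually_gt_atTop 0] with y hy d
    have hm : |(moebius d : ℝ)| ≤ 1 := by exact_mod_cast abs_moebius_le_one
    rw [hfl, norm_mul, Real.norm_eq_abs, Real.norm_of_nonneg (by positivity)]
    have : (⌊1 / (d:ℝ) ^ 2 * y⌋₊ : ℝ) / y ≤ 1 / (d:ℝ) ^ 2 := by
      rw [div_le_iff₀ hy]; exact Nat.floor_le (by positivity)
    calc _ ≤ 1 * ((⌊1 / (d:ℝ) ^ 2 * y⌋₊ : ℝ) / y) := mul_le_mul_of_nonneg_right hm (by positivity)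
      _ ≤ _ := by rw [one_mul]; exact this


lemma np_prime (j : ℕ) : (nthPrime j).Prime := Nat.prime_nth_prime j

lemma np_strictMono : StrictMono nthPrime := Nat.nth_strictMono Nat.infinite_setOfPred_prime

lemma np_surj {m p : ℕ} (hm : 1 ≤ m) (hp : p.Prime) (hle : p ≤ nthPrime (m - 1)) :
    ∃ j, j < m ∧ nthPrime j = p := by
  have h : nthPrime (Nat.count Nat.Prime p) = p := Nat.nth_count hp
  refine ⟨Nat.count Nat.Prime p, ?_, h⟩
  rw [← h] at hle
  have := np_strictMono.le_iff_le.1 hle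
  omega

lemma np_tendsto : Tendsto (fun m : ℕ => (nthPrime (m - 1) : ℝ)) atTop atTop :=
  tendsto_natCast_atTop_atTop.comp (np_strictMono.tendsto_atTop.comp (tendsto_sub_atTop_nat 1))

lemma Zm_pos (m : ℕ) : 0 < Zm m := Finset.prod_pos fun j _ => by positivity

lemma log_Zm {m : ℕ} (hm : 1 ≤ m) :
    Real.log (Zm m) = ∑ n ∈ Finset.range (nthPrime (m - 1) + 1), aW n := by
  unfold Zm
  rw [Real.log_prod (fun j _ => by positivity)]
  have : (Finset.range (nthPrime (m - 1) + 1)).filter Nat.Prime = (Finset.range m).image nthPrime := by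
    ext n
    simp only [Finset.mem_filter, Finset.mem_range, Finset.mem_image]
    constructor
    · rintro ⟨h1, h2⟩
      exact np_surj hm h2 (by omega)
    · rintro ⟨j, hj, rfl⟩
      refine ⟨?_, np_prime j⟩
      have := np_strictMono.monotone (show j ≤ m - 1 by omega)
      omega
  unfold aW
  rw [← Finset.sum_filter, this, Finset.sum_image (fun a _ b _ h => np_strictMono.injective h)]

lemma Zm_lim : Tendsto (fun m : ℕ => Real.log (nthPrime (m - 1)) / Zm m) atTop
    (𝓝 (Real.exp (-Real.eulerMascheroniConstant) * zr 2)) := by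
  have h1 := (mertens3_log.comp np_tendsto).neg
  have h2 := (Real.continuous_exp.tendsto _).comp h1
  have e : Real.exp (-(Real.eulerMascheroniConstant - Real.log (zr 2))) =
      Real.exp (-Real.eulerMascheroniConstant) * zr 2 := by
    rw [neg_sub, sub_eq_add_neg, Real.exp_add, Real.exp_log (zr_pos (by norm_num)), mul_comm]
  rw [e] at h2
  refine h2.congr' ?_
  filter_upwards [eventually_ge_atTop 1] with m hm
  have hl : 0 < Real.log (nthPrime (m - 1)) := Real.log_pos (by exact_mod_cast (np_prime _).one_lt)
  simp only [Function.comp, Nat.floor_natCast]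
  rw [← log_Zm hm, neg_sub, Real.exp_sub, Real.exp_log hl, Real.exp_log (Zm_pos m)]

lemma dvd_elt {m p : ℕ} (hp : p.Prime) (ν : Fin m → Bool) :
    p ∣ elt m ν ↔ ∃ j : Fin m, ν j = true ∧ nthPrime j = p := by
  unfold elt
  rw [hp.prime.dvd_finsetProd_iff]
  constructor
  · rintro ⟨j, -, h⟩
    split_ifs at h with hj
    · exact ⟨j, hj, ((Nat.prime_dvd_prime_iff_eq hp (np_prime j)).1 h).symm⟩
    · exact absurd (Nat.dvd_one.1 h) hp.one_lt.ne'
  · rintro ⟨j, hj, rfl⟩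
    exact ⟨j, Finset.mem_univ _, by simp [hj]⟩

lemma elt_inj (m : ℕ) : Function.Injective (elt m) := by
  intro ν ν' h
  ext j
  have key : ∀ ν : Fin m → Bool, nthPrime j ∣ elt m ν ↔ ν j = true := by
    intro ν
    rw [dvd_elt (np_prime j)]
    constructor
    · rintro ⟨i, hi, e⟩
      have := Fin.ext (np_strictMono.injective e)
      rwa [← this]
    · intro h; exact ⟨j, h, rfl⟩
  have := (key ν).symm.trans ((by rw [h] : nthPrime j ∣ elt m ν ↔ nthPrime j ∣ elt m ν').trans (key ν'))
  exact Bool.eq_iff_iff.2 this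

lemma elt_sqf (m : ℕ) (ν : Fin m → Bool) : Squarefree (elt m ν) := by
  unfold elt
  apply Finset.squarefree_prod_of_pairwise_isCoprime
  · intro i _ j _ hij
    simp only [Function.onFun]
    rw [← Nat.coprime_iff_isRelPrime]
    split_ifs
    · rw [Nat.coprime_primes (np_prime _) (np_prime _)]
      intro h; exact hij (Fin.ext (np_strictMono.injective h))
    all_goals simp
  · intro i _
    split_ifs
    · exact (np_prime _).prime.squarefree
    · exact squarefree_one

lemma elt_surj {m n : ℕ} (hm : 1 ≤ m) (hn : Squarefree n) (hle : n ≤ nthPrime (m - 1)) :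
    ∃ ν, elt m ν = n := by
  refine ⟨fun j => decide (nthPrime j ∣ n), ?_⟩
  rw [Nat.Squarefree.ext_iff (elt_sqf _ _) hn]
  intro p hp
  rw [dvd_elt hp]
  constructor
  · rintro ⟨j, hj, rfl⟩
    simpa using hj
  · intro h
    obtain ⟨j, hj, e⟩ := np_surj hm hp ((Nat.le_of_dvd (Nat.pos_of_ne_zero hn.ne_zero) h).trans hle)
    exact ⟨⟨j, hj⟩, by simpa [e] using h, e⟩

open scoped Classical in
/-- the `k`-th bin -/
def bin (m : ℕ) (σ : ℝ) (K k : ℕ) : Finset (Fin m → Bool) :=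
  Finset.univ.filter (fun ν : Fin m → Bool =>
      σ * k / K < Real.log (elt m ν) / Real.log (nthPrime (m - 1)) ∧
      Real.log (elt m ν) / Real.log (nthPrime (m - 1)) < σ * (k + 1) / K)

lemma elt_pos (m : ℕ) (ν : Fin m → Bool) : 0 < elt m ν := Nat.pos_of_ne_zero (elt_sqf m ν).ne_zero

lemma mem_bin {m K k : ℕ} {σ : ℝ} (hσ : 0 < σ) (hK : 1 ≤ K) (ν : Fin m → Bool) :
    ν ∈ bin m σ K k ↔ σ * Real.log (nthPrime (m - 1)) / K * k < Real.log (elt m ν) ∧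
      Real.log (elt m ν) < σ * Real.log (nthPrime (m - 1)) / K * (k + 1) := by
  have hl : 0 < Real.log (nthPrime (m - 1)) := Real.log_pos (by exact_mod_cast (np_prime _).one_lt)
  simp only [bin, Finset.mem_filter, Finset.mem_univ, true_and]
  rw [lt_div_iff₀ hl, div_lt_iff₀ hl]
  have e1 : σ * k / K * Real.log (nthPrime (m - 1)) = σ * Real.log (nthPrime (m - 1)) / K * k := by ring
  have e2 : σ * (k + 1) / K * Real.log (nthPrime (m - 1)) = σ * Real.log (nthPrime (m - 1)) / K * (k + 1) := by ring
  rw [e1, e2]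

lemma sqf_grid {n n' : ℕ} {h : ℝ} (hh : 0 < h) (hn : Squarefree n) (hn' : Squarefree n') (h1 : 1 < n)
    (h1' : 1 < n') {k k' : ℕ} (hk : Real.log n = h * k) (hk' : Real.log n' = h * k') : n = n' := by
  have key : n ^ k' = n' ^ k := by
    have : ((n : ℝ)) ^ k' = (n' : ℝ) ^ k := by
      apply Real.log_injOn_pos
      · simp only [Set.mem_Ioi]; positivity
      · simp only [Set.mem_Ioi]; positivity
      · rw [Real.log_pow, Real.log_pow, hk, hk']; ring
    exact_mod_cast this
  have main : ∀ {n n' k k' : ℕ}, Squarefree n → Squarefree n' → 1 < n → n ^ k' = n' ^ k → k' ≤ k := by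
    intro n n' k k' hn hn' h1 key
    obtain ⟨p, hp, hpn⟩ := Nat.exists_prime_and_dvd h1.ne'
    have h2 := congrArg (fun z => z.factorization p) key
    simp only [Nat.factorization_pow, Finsupp.smul_apply, smul_eq_mul] at h2
    have h3 : n.factorization p = 1 := le_antisymm (hn.natFactorization_le_one p)
      ((hp.dvd_iff_one_le_factorization hn.ne_zero).1 hpn)
    have h4 := hn'.natFactorization_le_one p
    rw [h3] at h2
    nlinarith
  have hkk : k = k' := le_antisymm (main hn' hn h1' key.symm) (main hn hn' h1 key)
  subst hkk
  rw [← hk] at hk'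
  have := Real.log_injOn_pos (by simp only [Set.mem_Ioi]; positivity) (by simp only [Set.mem_Ioi]; positivity) hk'
  exact_mod_cast this.symm

lemma count_bounds {m K : ℕ} {σ : ℝ} (hm : 1 ≤ m) (hσ : 0 < σ) (hσ1 : σ ≤ 1) (hK : 1 ≤ K) :
    ∑ k ∈ Finset.range K, (bin m σ K k).card ≤ sqc ⌊(nthPrime (m - 1) : ℝ) ^ σ⌋₊ ∧
    sqc ⌊(nthPrime (m - 1) : ℝ) ^ σ⌋₊ ≤ ∑ k ∈ Finset.range K, (bin m σ K k).card + 2 := by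
  classical
  have hx1 : (1:ℝ) < nthPrime (m - 1) := by exact_mod_cast (np_prime _).one_lt
  set x : ℝ := ((nthPrime (m - 1) : ℕ) : ℝ) with hx
  have hl : 0 < Real.log x := Real.log_pos hx1
  have hKr : (0:ℝ) < K := by exact_mod_cast hK
  set h : ℝ := σ * Real.log x / K with hh
  have hh0 : 0 < h := by positivity
  have hhK : h * K = σ * Real.log x := by rw [hh]; field_simp
  have hxs : ∀ n : ℕ, 0 < n → ((n : ℝ) ≤ x ^ σ ↔ Real.log n ≤ h * K) := by
    intro n hn
    have hn' : (0:ℝ) < n := by exact_mod_cast hn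
    rw [← Real.log_le_log_iff hn' (by positivity), Real.log_rpow (by linarith), hhK]
  set U := (Finset.range K).biUnion (bin m σ K) with hU
  have hcard : U.card = ∑ k ∈ Finset.range K, (bin m σ K k).card := by
    apply Finset.card_biUnion
    intro k _ k' _ hne
    simp only [Function.onFun]
    rw [Finset.disjoint_left]
    intro ν h1 h2
    rw [mem_bin hσ hK] at h1 h2
    have a1 := lt_of_mul_lt_mul_left (h1.1.trans h2.2) hh0.le
    have a2 := lt_of_mul_lt_mul_left (h2.1.trans h1.2) hh0.le
    have b1 : k < k' + 1 := by exact_mod_cast a1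
    have b2 : k' < k + 1 := by exact_mod_cast a2
    omega
  have himg : (U.image (elt m)).card = ∑ k ∈ Finset.range K, (bin m σ K k).card := by
    rw [Finset.card_image_of_injective _ (elt_inj m), hcard]
  rw [← himg]
  unfold sqc
  constructor
  · apply Finset.card_le_card
    intro n hn
    obtain ⟨ν, hν, rfl⟩ := Finset.mem_image.1 hn
    obtain ⟨k, hk, hν⟩ := Finset.mem_biUnion.1 hν
    rw [mem_bin hσ hK] at hν
    rw [Finset.mem_filter, Finset.mem_Ioc]
    refine ⟨⟨elt_pos _ _, Nat.le_floor ?_⟩, elt_sqf _ _⟩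
    rw [hxs _ (elt_pos _ _)]
    refine hν.2.le.trans (mul_le_mul_of_nonneg_left ?_ hh0.le)
    exact_mod_cast Finset.mem_range.1 hk
  · set A := (Finset.Ioc 0 ⌊x ^ σ⌋₊).filter Squarefree with hA
    set G := A.filter (fun n : ℕ => 1 < n ∧ ∃ k : ℕ, Real.log n = h * k) with hG
    have hG1 : G.card ≤ 1 := by
      rw [Finset.card_le_one]
      intro a ha b hb
      simp only [hG, hA, Finset.mem_filter] at ha hb
      obtain ⟨⟨_, a1⟩, a2, k, a3⟩ := ha
      obtain ⟨⟨_, b1⟩, b2, k', b3⟩ := hb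
      exact sqf_grid hh0 a1 b1 a2 b2 a3 b3
    have hsub : A ⊆ U.image (elt m) ∪ (({1} : Finset ℕ) ∪ G) := by
      intro n hn
      have hnA := hn
      simp only [hA, Finset.mem_filter, Finset.mem_Ioc] at hn
      obtain ⟨⟨hn0, hnf⟩, hsq⟩ := hn
      have hnx : (n:ℝ) ≤ x ^ σ := (Nat.le_floor_iff (by positivity)).1 hnf
      have hlog := (hxs n hn0).1 hnx
      rcases Nat.lt_or_ge 1 n with h1 | h1
      · by_cases hg : ∃ k : ℕ, Real.log n = h * k
        · exact Finset.mem_union_right _ (Finset.mem_union_right _ (Finset.mem_filter.2 ⟨hnA, h1, hg⟩))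
        · apply Finset.mem_union_left
          have hnx' : n ≤ nthPrime (m - 1) := by
            have : (n:ℝ) ≤ x := hnx.trans (by
              calc x ^ σ ≤ x ^ (1:ℝ) := Real.rpow_le_rpow_of_exponent_le hx1.le hσ1
                _ = x := Real.rpow_one x)
            rw [hx] at this
            exact_mod_cast this
          obtain ⟨ν, rfl⟩ := elt_surj hm hsq hnx'
          rw [Finset.mem_image]
          refine ⟨ν, ?_, rfl⟩
          have hq0 : 0 ≤ Real.log (elt m ν) / h := div_nonneg (Real.log_natCast_nonneg _) hh0.le
          have c1 := Nat.floor_le hq0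
          have c2 := Nat.lt_floor_add_one (Real.log (elt m ν) / h)
          set k := ⌊Real.log (elt m ν) / h⌋₊
          rw [le_div_iff₀ hh0, mul_comm] at c1
          rw [div_lt_iff₀ hh0, mul_comm] at c2
          have c3 : h * k < Real.log (elt m ν) := lt_of_le_of_ne c1 fun e => hg ⟨k, e.symm⟩
          rw [Finset.mem_biUnion]
          refine ⟨k, ?_, (mem_bin hσ hK ν).2 ⟨c3, c2⟩⟩
          have := lt_of_mul_lt_mul_left (c3.trans_le hlog) hh0.le
          exact Finset.mem_range.2 (by exact_mod_cast this)
      · have : n = 1 := by omega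
        exact Finset.mem_union_right _ (Finset.mem_union_left _ (Finset.mem_singleton.2 this))
    have h1 := Finset.card_le_card hsub
    have h2 := Finset.card_union_le (U.image (elt m)) (({1} : Finset ℕ) ∪ G)
    have h3 := Finset.card_union_le ({1} : Finset ℕ) G
    rw [Finset.card_singleton] at h3
    omega


lemma xpow_eq {x σ : ℝ} (hx : 0 < x) (K k : ℕ) :
    x ^ (σ - σ * k / (K : ℝ)) = x ^ σ / Real.exp (σ * Real.log x / K * k) := by
  rw [Real.rpow_sub hx]
  congr 1
  rw [Real.rpow_def_of_pos hx]
  congr 1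
  ring

lemma term_bounds {m K k : ℕ} {σ : ℝ} (hσ : 0 < σ) (hK : 1 ≤ K) {ν : Fin m → Bool}
    (hν : ν ∈ bin m σ K k) :
    Real.exp (-(σ * Real.log (nthPrime (m - 1)) / K)) / (Zm m * (nthPrime (m - 1) : ℝ) ^ σ) ≤
      mass m ν / (nthPrime (m - 1) : ℝ) ^ (σ - σ * k / (K : ℝ)) ∧
    mass m ν / (nthPrime (m - 1) : ℝ) ^ (σ - σ * k / (K : ℝ)) ≤
      1 / (Zm m * (nthPrime (m - 1) : ℝ) ^ σ) := by
  have hx0 : (0:ℝ) < nthPrime (m - 1) := by exact_mod_cast (np_prime _).pos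
  rw [mem_bin hσ hK] at hν
  rw [xpow_eq hx0]
  have hZ := Zm_pos m
  have hn : (0:ℝ) < elt m ν := by exact_mod_cast elt_pos m ν
  unfold mass
  set x : ℝ := ((nthPrime (m - 1) : ℕ) : ℝ)
  set h : ℝ := σ * Real.log x / K
  have hxs : 0 < x ^ σ := Real.rpow_pos_of_pos hx0 σ
  have e : 1 / (Zm m * (elt m ν : ℝ)) / (x ^ σ / Real.exp (h * k))
      = (Real.exp (h * k) / elt m ν) / (Zm m * x ^ σ) := by
    have := Real.exp_pos (h * k)
    field_simp
  rw [e]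
  constructor
  · gcongr
    rw [le_div_iff₀ hn]
    have : (elt m ν : ℝ) ≤ Real.exp (h * (k + 1)) := (Real.log_le_iff_le_exp hn).1 hν.2.le
    calc Real.exp (-h) * elt m ν ≤ Real.exp (-h) * Real.exp (h * (k + 1)) := by gcongr
      _ = Real.exp (h * k) := by rw [← Real.exp_add]; congr 1; ring
  · gcongr
    rw [div_le_one hn]
    exact ((Real.lt_log_iff_exp_lt hn).1 hν.1).le

lemma S1_bounds {m K : ℕ} {σ : ℝ} (hσ : 0 < σ) (hK : 1 ≤ K) :
    (∑ k ∈ Finset.range K, (bin m σ K k).card : ℕ) *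
      (Real.exp (-(σ * Real.log (nthPrime (m - 1)) / K)) / (Zm m * (nthPrime (m - 1) : ℝ) ^ σ)) ≤
    ∑ k ∈ Finset.range K, (∑ ν ∈ bin m σ K k, mass m ν) /
      (nthPrime (m - 1) : ℝ) ^ (σ - σ * k / (K : ℝ)) ∧
    ∑ k ∈ Finset.range K, (∑ ν ∈ bin m σ K k, mass m ν) /
      (nthPrime (m - 1) : ℝ) ^ (σ - σ * k / (K : ℝ)) ≤
    (∑ k ∈ Finset.range K, (bin m σ K k).card : ℕ) *
      (1 / (Zm m * (nthPrime (m - 1) : ℝ) ^ σ)) := by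
  push_cast
  rw [Finset.sum_mul, Finset.sum_mul]
  constructor
  · apply Finset.sum_le_sum
    intro k _
    rw [Finset.sum_div, ← nsmul_eq_mul]
    exact Finset.card_nsmul_le_sum _ _ _ fun ν hν => (term_bounds hσ hK hν).1
  · apply Finset.sum_le_sum
    intro k _
    rw [Finset.sum_div, ← nsmul_eq_mul]
    exact Finset.sum_le_card_nsmul _ _ _ fun ν hν => (term_bounds hσ hK hν).2

lemma S2_eq {m K : ℕ} {σ : ℝ} (hσ : 0 < σ) (hK : 1 ≤ K) (C : ℝ) :
    (∑ k ∈ Finset.range K, (C * σ / K) / (nthPrime (m - 1) : ℝ) ^ (σ - σ * k / (K : ℝ))) *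
      Real.log (nthPrime (m - 1)) =
    C * (1 - ((nthPrime (m - 1) : ℝ) ^ σ)⁻¹) *
      ((Real.exp (σ * Real.log (nthPrime (m - 1)) / K) - 1) /
        (σ * Real.log (nthPrime (m - 1)) / K))⁻¹ := by
  have hx1 : (1:ℝ) < nthPrime (m - 1) := by exact_mod_cast (np_prime _).one_lt
  have hx0 : (0:ℝ) < nthPrime (m - 1) := by linarith
  have hl := Real.log_pos hx1
  have hKr : (0:ℝ) < K := by exact_mod_cast hK
  simp only [xpow_eq hx0]
  set x : ℝ := ((nthPrime (m - 1) : ℕ) : ℝ)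
  have hxs : 0 < x ^ σ := Real.rpow_pos_of_pos hx0 σ
  have e0 : Real.exp (σ * Real.log x / K) ^ K = x ^ σ := by
    rw [← Real.exp_nat_mul, Real.rpow_def_of_pos hx0]
    congr 1
    field_simp
  have hh0 : 0 < σ * Real.log x / K := by positivity
  have hne : 0 < Real.exp (σ * Real.log x / K) - 1 := by
    have := Real.add_one_lt_exp hh0.ne'
    linarith
  have e1 : ∀ k : ℕ, (C * σ / K) / (x ^ σ / Real.exp (σ * Real.log x / K * k)) =
      (C * σ / K / x ^ σ) * Real.exp (σ * Real.log x / K) ^ k := by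
    intro k
    rw [← Real.exp_nat_mul, mul_comm (k:ℝ)]
    have := Real.exp_pos (σ * Real.log x / K * k)
    field_simp
  simp only [e1]
  rw [← Finset.mul_sum, geom_sum_eq (by linarith), e0]
  generalize Real.exp (σ * Real.log x / K) = q at *
  have : q - 1 ≠ 0 := hne.ne'
  field_simp

lemma alg1 (L Z T X q : ℝ) : L / Z * (T / X) * q = T * (q / (Z * X)) * L := by
  simp only [div_eq_mul_inv, mul_inv]; ring

lemma alg2 (L Z T X : ℝ) : T * (1 / (Z * X)) * L = L / Z * (T / X) := by
  simp only [div_eq_mul_inv, mul_inv]; ring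

lemma main_lim (K : ℕ → ℕ) (hK : ∀ m, 1 ≤ K m) (c : ℝ)
    (hlim : Tendsto (fun m : ℕ => (Real.log (nthPrime (m - 1))) ^ 3 / (K m : ℝ) ^ 2)
      atTop (𝓝 c))
    (σ : ℝ) (hσ0 : 0 < σ) (hσ1 : σ ≤ 1) :
    Tendsto (fun m : ℕ => (∑ k ∈ Finset.range (K m),
        Err m σ (K m) k / (nthPrime (m - 1) : ℝ) ^ (σ - σ * k / (K m : ℝ))) *
        Real.log (nthPrime (m - 1))) atTop (𝓝 0) := by
  have hx1 : ∀ m : ℕ, (1:ℝ) < nthPrime (m - 1) := fun m => by exact_mod_cast (np_prime _).one_lt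
  have hl : ∀ m : ℕ, 0 < Real.log (nthPrime (m - 1)) := fun m => Real.log_pos (hx1 m)
  have hKr : ∀ m, (0:ℝ) < K m := fun m => by exact_mod_cast hK m
  have hLt : Tendsto (fun m : ℕ => Real.log (nthPrime (m - 1))) atTop atTop :=
    Real.tendsto_log_atTop.comp np_tendsto
  have hxst : Tendsto (fun m : ℕ => (nthPrime (m - 1) : ℝ) ^ σ) atTop atTop :=
    (tendsto_rpow_atTop hσ0).comp np_tendsto
  have hxs0 : ∀ m : ℕ, 0 < (nthPrime (m - 1) : ℝ) ^ σ := fun m =>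
    Real.rpow_pos_of_pos (by linarith [hx1 m]) σ
  -- the mesh tends to zero
  have hh : Tendsto (fun m : ℕ => σ * Real.log (nthPrime (m - 1)) / K m) atTop (𝓝 0) := by
    have h1 := hlim.mul (tendsto_inv_atTop_zero.comp hLt)
    rw [mul_zero] at h1
    have h2 := ((Real.continuous_sqrt.tendsto _).comp h1).const_mul σ
    rw [Real.sqrt_zero, mul_zero] at h2
    refine h2.congr fun m => ?_
    simp only [Function.comp]
    have : Real.log (nthPrime (m - 1)) ^ 3 / (K m : ℝ) ^ 2 * (Real.log (nthPrime (m - 1)))⁻¹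
        = (Real.log (nthPrime (m - 1)) / K m) ^ 2 := by
      have := (hl m).ne'
      have := (hKr m).ne'
      field_simp
    rw [this, Real.sqrt_sq (div_nonneg (hl m).le (hKr m).le)]
    ring
  have hh0 : ∀ m, 0 < σ * Real.log (nthPrime (m - 1)) / K m := fun m =>
    div_pos (mul_pos hσ0 (hl m)) (hKr m)
  set C := Real.exp (-Real.eulerMascheroniConstant) with hC
  -- second sum
  have hS2 : Tendsto (fun m : ℕ => (∑ k ∈ Finset.range (K m), (C * σ / K m) /
      (nthPrime (m - 1) : ℝ) ^ (σ - σ * k / (K m : ℝ))) * Real.log (nthPrime (m - 1)))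
      atTop (𝓝 C) := by
    have hd : Tendsto (fun t : ℝ => (Real.exp t - 1) / t) (𝓝[≠] 0) (𝓝 1) := by
      have := (Real.hasDerivAt_exp 0).tendsto_slope
      rw [Real.exp_zero] at this
      refine this.congr fun t => ?_
      rw [slope_def_field]; simp
    have hd2 := (hd.comp (tendsto_nhdsWithin_iff.2 ⟨hh, Eventually.of_forall fun m =>
      (hh0 m).ne'⟩)).inv₀ one_ne_zero
    have h3 := (((tendsto_inv_atTop_zero.comp hxst).const_sub 1).const_mul C).mul hd2
    simp only [sub_zero, inv_one, mul_one] at h3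
    refine h3.congr fun m => ?_
    rw [S2_eq hσ0 (hK m)]
    rfl
  -- counting
  have hT : Tendsto (fun m : ℕ => ((∑ k ∈ Finset.range (K m), (bin m σ (K m) k).card : ℕ) : ℝ) /
      (nthPrime (m - 1) : ℝ) ^ σ) atTop (𝓝 (1 / zr 2)) := by
    have h1 := sqc_lim.comp hxst
    have h2 := h1.sub ((tendsto_inv_atTop_zero.comp hxst).const_mul 2)
    rw [mul_zero, sub_zero] at h2
    refine tendsto_of_tendsto_of_tendsto_of_le_of_le' h2 h1 ?_ ?_
    · filter_upwards [eventually_ge_atTop 1] with m hm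
      have := (count_bounds (m := m) hm hσ0 hσ1 (hK m)).2
      have h' : (sqc ⌊(nthPrime (m - 1) : ℝ) ^ σ⌋₊ : ℝ) ≤
        ((∑ k ∈ Finset.range (K m), (bin m σ (K m) k).card : ℕ) : ℝ) + 2 := by exact_mod_cast this
      simp only [Function.comp]
      rw [← div_eq_mul_inv, ← sub_div]
      exact div_le_div_of_nonneg_right (by linarith) (hxs0 m).le
    · filter_upwards [eventually_ge_atTop 1] with m hm
      have := (count_bounds (m := m) hm hσ0 hσ1 (hK m)).1
      simp only [Function.comp]
      exact div_le_div_of_nonneg_right (by exact_mod_cast this) (hxs0 m).le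
  have hz := (zr_pos (x := 2) (by norm_num)).ne'
  have hU := Zm_lim.mul hT
  have e1 : Real.exp (-Real.eulerMascheroniConstant) * zr 2 * (1 / zr 2) = C := by
    rw [hC]; field_simp
  rw [e1] at hU
  have hLo := hU.mul ((Real.continuous_exp.tendsto _).comp hh.neg)
  rw [neg_zero, Real.exp_zero, mul_one] at hLo
  have hS1 : Tendsto (fun m : ℕ => (∑ k ∈ Finset.range (K m), (∑ ν ∈ bin m σ (K m) k, mass m ν) /
      (nthPrime (m - 1) : ℝ) ^ (σ - σ * k / (K m : ℝ))) * Real.log (nthPrime (m - 1)))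
      atTop (𝓝 C) := by
    refine tendsto_of_tendsto_of_tendsto_of_le_of_le hLo hU ?_ ?_
    · intro m
      refine le_trans (le_of_eq ?_) (mul_le_mul_of_nonneg_right (S1_bounds (m := m) hσ0 (hK m)).1 (hl m).le)
      exact alg1 _ _ _ _ _
    · intro m
      refine le_trans (mul_le_mul_of_nonneg_right (S1_bounds (m := m) hσ0 (hK m)).2 (hl m).le) (le_of_eq ?_)
      exact alg2 _ _ _ _
  have hfin := hS1.sub hS2
  rw [sub_self] at hfin
  refine hfin.congr fun m => ?_
  rw [← sub_mul, ← Finset.sum_sub_distrib]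
  congr 1
  apply Finset.sum_congr rfl
  intro k _
  rw [← sub_div]
  rfl

lemma main_o (K : ℕ → ℕ) (hK : ∀ m, 1 ≤ K m) (c : ℝ)
    (hlim : Tendsto (fun m : ℕ => (Real.log (nthPrime (m - 1))) ^ 3 / (K m : ℝ) ^ 2)
      atTop (𝓝 c))
    (σ : ℝ) (hσ0 : 0 < σ) (hσ1 : σ ≤ 1) :
    (fun m : ℕ => ∑ k ∈ Finset.range (K m),
        Err m σ (K m) k / (nthPrime (m - 1) : ℝ) ^ (σ - σ * k / (K m : ℝ))) =o[atTop]
      fun m : ℕ => 1 / Real.log (nthPrime (m - 1)) := by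
  have hl : ∀ m : ℕ, 0 < Real.log (nthPrime (m - 1)) := fun m =>
    Real.log_pos (by exact_mod_cast (np_prime _).one_lt)
  rw [isLittleO_iff_tendsto fun m h => absurd h (one_div_pos.2 (hl m)).ne']
  refine (main_lim K hK c hlim σ hσ0 hσ1).congr fun m => ?_
  rw [div_div_eq_mul_div, div_one]


/-- Corollary 1 of the paper: the weighted sum of error terms, with weights
`p_m^{-(σ-δ_k)}`, is `O(1/ln p_m)` if `c > 0` and `o(1/ln p_m)` if `c = 0`. -/
theorem weighted_error_sum_asymptotics (K : ℕ → ℕ) (hK : ∀ m, 1 ≤ K m) (c : ℝ) (hc : 0 ≤ c)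
    (hlim : Tendsto (fun m : ℕ => (Real.log (nthPrime (m - 1))) ^ 3 / (K m : ℝ) ^ 2)
      atTop (𝓝 c))
    (σ : ℝ) (hσ0 : 0 < σ) (hσ1 : σ ≤ 1) :
    (0 < c → (fun m : ℕ => ∑ k ∈ Finset.range (K m),
        Err m σ (K m) k / (nthPrime (m - 1) : ℝ) ^ (σ - σ * k / (K m : ℝ))) =O[atTop]
      fun m : ℕ => 1 / Real.log (nthPrime (m - 1))) ∧
    (c = 0 → (fun m : ℕ => ∑ k ∈ Finset.range (K m),
        Err m σ (K m) k / (nthPrime (m - 1) : ℝ) ^ (σ - σ * k / (K m : ℝ))) =o[atTop]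
      fun m : ℕ => 1 / Real.log (nthPrime (m - 1))) := by
  have h := main_o K hK c hlim σ hσ0 hσ1
  exact ⟨fun _ => h.isBigO, fun _ => h⟩

end
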